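/- Let 0 ≤ r1, r2 ≤ n and 0 ≤ s ≤ min(r1, n − r1, r2, n − r2). Then Σ_{x1 ∈ X_{r1}} Σ_{x2 ∈ X_{r2}} λ_s^{r1,r2}(|x2 \ x1|; n)² = ([r1]_s [n−r2]_s / ([n−r1]_s [r2]_s)) · binom(n, r1) · binom(n, r2) / (binom(n, s) − binom(n, s−1)), where binom(n, −1) = 0; equivalently, the Hilbert–Schmidt norm tr(Λ_s^{r1,r2} ∘ (Λ_s^{r1,r2})*) equals this quantity. -/

import Mathlib

/-- Falling factorial `z(z-1)⋯(z-k+1)` for complex `z`. -/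
noncomputable def cfall (z : ℂ) (k : ℕ) : ℂ := ∏ i ∈ Finset.range k, (z - i)

/-- Generalized binomial coefficient `binom(t, j)` for complex `t`. -/
noncomputable def cbinom (t : ℂ) (j : ℕ) : ℂ := cfall t j / (Nat.factorial j)

/-- The Hahn kernel `λ_s^{r1,r2}(t; n)`. -/
noncomputable def hahn (n r1 r2 s : ℕ) (t : ℂ) : ℂ :=
  ∑ j ∈ Finset.range (s + 1),
    (-1 : ℂ) ^ j * cbinom t j * cfall (s : ℂ) j * cfall ((n : ℂ) - s + 1) j /
      (cfall ((n : ℂ) - r1) j * cfall (r2 : ℂ) j)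

/-- The operator `Λ_s^{r1,r2} : (X_{r1} → ℂ) → (X_{r2} → ℂ)` with kernel
`λ_s^{r1,r2}(|x2 \ x1|; n)`. -/
noncomputable def Lam (Ω : Type*) [Fintype Ω] [DecidableEq Ω] (n r1 r2 s : ℕ)
    (ψ : {x : Finset Ω // x.card = r1} → ℂ) : {x : Finset Ω // x.card = r2} → ℂ :=
  fun x2 => ∑ x1 : {x : Finset Ω // x.card = r1},
    hahn n r1 r2 s ((((x2 : Finset Ω) \ (x1 : Finset Ω)).card : ℕ) : ℂ) * ψ x1

def FF (A B R j k : ℕ) : ℕ :=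
  ∑ p ∈ Finset.HasAntidiagonal.antidiagonal R, A.choose p.1 * B.choose p.2 * (p.1.descFactorial j * p.2.descFactorial k)

theorem FF_swap (A B R j k : ℕ) : FF A B R j k = FF B A R k j := by
  unfold FF
  rw [← Finset.Nat.sum_antidiagonal_swap]
  refine Finset.sum_congr rfl fun p _ => ?_
  simp only [Prod.fst_swap, Prod.snd_swap]
  ring

theorem FF_zero_A (B R j k : ℕ) : FF 0 B R (j+1) k = 0 := by
  unfold FF
  refine Finset.sum_eq_zero fun p _ => ?_
  rcases p with ⟨_ | t, u⟩ <;> simp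

theorem FF_zero_R (A B j k : ℕ) : FF A B 0 (j+1) k = 0 := by
  unfold FF
  simp

theorem FF_succ (A B R j k : ℕ) : FF (A+1) B (R+1) (j+1) k = (A+1) * FF A B R j k := by
  unfold FF
  rw [Finset.Nat.sum_antidiagonal_succ, Finset.mul_sum]
  simp only [Nat.zero_descFactorial_succ, zero_mul, mul_zero, zero_add]
  refine Finset.sum_congr rfl fun p _ => ?_
  rw [Nat.succ_descFactorial_succ]
  have := Nat.add_one_mul_choose_eq A p.1
  calc _ = ((A+1).choose (p.1+1) * (p.1+1)) * B.choose p.2 * (p.1.descFactorial j * p.2.descFactorial k) := by ring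
    _ = _ := by rw [← this]; ring

theorem FF_step (B k : ℕ)
    (h : ∀ A R, FF A B R 0 k * (A+B).descFactorial k =
      B.descFactorial k * (A+B).choose R * R.descFactorial k) (j : ℕ) : ∀ (A R : ℕ),
    FF A B R j k * (A+B).descFactorial (j+k) =
      A.descFactorial j * B.descFactorial k * (A+B).choose R * R.descFactorial (j+k) := by
  induction j with
  | zero => intro A R; simpa using h A R
  | succ j ih =>
    intro A R
    rcases A with _ | A
    · simp [FF_zero_A]
    rcases R with _ | R
    · simp [FF_zero_R, show j+1+k = (j+k)+1 by ring]
    rw [FF_succ, show j+1+k = (j+k)+1 by ring, show A+1+B = (A+B)+1 by ring,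
      Nat.succ_descFactorial_succ, Nat.succ_descFactorial_succ, Nat.succ_descFactorial_succ]
    have h1 := ih A R
    have h2 := Nat.add_one_mul_choose_eq (A+B) R
    calc _ = (A+1) * (A+B+1) * (FF A B R j k * (A+B).descFactorial (j+k)) := by ring
      _ = (A+1) * A.descFactorial j * B.descFactorial k * R.descFactorial (j+k) * ((A+B+1) * (A+B).choose R) := by rw [h1]; ring
      _ = _ := by rw [h2]; ring

theorem FF_eq (A B R j k : ℕ) :
    FF A B R j k * (A+B).descFactorial (j+k) =
      A.descFactorial j * B.descFactorial k * (A+B).choose R * R.descFactorial (j+k) := by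
  refine FF_step B k ?_ j A R
  intro A R
  have := FF_step A 0 (fun B R => by simp [FF, Nat.add_choose_eq]) k B R
  rw [FF_swap, add_comm A B]
  simpa using this

theorem cfall_nat (a k : ℕ) : cfall (a : ℂ) k = (a.descFactorial k : ℂ) := by
  rw [Nat.descFactorial_eq_prod_range, cfall]
  induction k with
  | zero => simp
  | succ k ih =>
    rw [Finset.prod_range_succ, Finset.prod_range_succ, ih]
    by_cases h : k ≤ a
    · push_cast [Nat.cast_sub h]; ring
    · have : ∏ i ∈ Finset.range k, (a - i) = 0 :=
        Finset.prod_eq_zero (i := a) (by simp; omega) (by simp)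
      simp [this]

theorem cfall_zero (z : ℂ) : cfall z 0 = 1 := by simp [cfall]

theorem cfall_succ (z : ℂ) (k : ℕ) : cfall z (k+1) = cfall z k * (z - k) := by
  simp [cfall, Finset.prod_range_succ]

theorem cfall_add (z : ℂ) (a b : ℕ) : cfall z (a+b) = cfall z a * cfall (z - a) b := by
  simp only [cfall, Finset.prod_range_add]
  congr 1
  refine Finset.prod_congr rfl fun i _ => ?_
  push_cast; ring

theorem cfall_succ' (z : ℂ) (k : ℕ) : cfall z (k+1) = z * cfall (z-1) k := by
  rw [add_comm, cfall_add]; simp [cfall]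

theorem cfall_ne {a k : ℕ} (h : k ≤ a) : cfall (a : ℂ) k ≠ 0 := by
  rw [cfall_nat]
  exact_mod_cast (Nat.descFactorial_pos.2 h).ne'

noncomputable def DS (s : ℕ) (f : ℕ → ℂ) : ℂ :=
  ∑ j ∈ Finset.range (s+1), (-1 : ℂ)^j * (s.choose j : ℂ) * f j

theorem DS_mul (s : ℕ) (c : ℂ) (f : ℕ → ℂ) : DS s (fun j => c * f j) = c * DS s f := by
  simp only [DS, Finset.mul_sum]
  exact Finset.sum_congr rfl fun _ _ => by ring

theorem DS_add (s : ℕ) (f g : ℕ → ℂ) : DS s (fun j => f j + g j) = DS s f + DS s g := by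
  simp only [DS, ← Finset.sum_add_distrib]
  exact Finset.sum_congr rfl fun _ _ => by ring

theorem DS_congr {s : ℕ} {f g : ℕ → ℂ} (h : ∀ j ≤ s, f j = g j) : DS s f = DS s g := by
  refine Finset.sum_congr rfl fun j hj => ?_
  rw [h j (by simp at hj; omega)]

theorem DS_succ (s : ℕ) (f : ℕ → ℂ) : DS (s+1) f = DS s f - DS s (fun j => f (j+1)) := by
  have e : DS s f = ∑ j ∈ Finset.range (s+2), (-1 : ℂ)^j * (s.choose j : ℂ) * f j := by
    rw [Finset.sum_range_succ]; simp [DS]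
  rw [e, DS, Finset.sum_range_succ', Finset.sum_range_succ' _ (s+1), DS]
  simp only [Nat.choose_succ_succ, Nat.choose_zero_right]
  rw [add_sub_right_comm, ← Finset.sum_sub_distrib]
  congr 1
  refine Finset.sum_congr rfl fun j _ => ?_
  push_cast; ring

open Polynomial in
theorem DS_poly (s : ℕ) (p : ℂ[X]) (h : p.natDegree < s) : DS s (fun j => p.eval (j : ℂ)) = 0 := by
  have h1 := congrFun (Polynomial.fwdDiff_iter_eq_zero_of_degree_lt h) 0
  rw [fwdDiff_iter_eq_sum_shift] at h1
  have h2 : DS s (fun j => p.eval (j : ℂ)) = (-1)^s * 0 := by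
    rw [show (0:ℂ) = (0 : ℂ → ℂ) 0 from rfl, ← h1, DS, Finset.mul_sum]
    refine Finset.sum_congr rfl fun j hj => ?_
    have hj : j ≤ s := by simp at hj; omega
    have : (-1:ℂ)^j = (-1)^s * (-1)^(s-j) := by
      obtain ⟨d, rfl⟩ := Nat.exists_eq_add_of_le hj
      rw [Nat.add_sub_cancel_left, pow_add, mul_assoc, ← pow_add, ← two_mul, pow_mul]; simp
    rw [this]
    simp
    ring
  simpa using h2

theorem DS_inv (s : ℕ) : ∀ x : ℂ, (∀ j : ℕ, j ≤ s → x - j ≠ 0) →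
    DS s (fun j => 1 / (x - j)) = (-1)^s * s.factorial / cfall x (s+1) := by
  induction s with
  | zero => intro x hx; simp [DS, cfall]
  | succ s ih =>
    intro x hx
    rw [DS_succ, ih x (fun j hj => hx j (by omega))]
    have h1 : (fun j : ℕ => 1 / (x - ((j+1 : ℕ) : ℂ))) = fun j : ℕ => 1 / ((x-1) - j) := by
      funext j; push_cast; ring
    rw [h1, ih (x-1) (fun j hj => by have := hx (j+1) (by omega); push_cast at this; convert this using 1; ring)]
    have a0 : x ≠ 0 := by simpa using hx 0 (by omega)
    have a1 : x - 1 - s ≠ 0 := by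
      have := hx (s+1) le_rfl; push_cast at this; convert this using 1; ring
    have a2 : cfall (x-1) s ≠ 0 := by
      rw [cfall, Finset.prod_ne_zero_iff]
      intro i hi
      have := hx (i+1) (by simp at hi; omega); push_cast at this; convert this using 1; ring
    rw [cfall_succ' x (s+1), cfall_succ' x s, cfall_succ (x-1) s, Nat.factorial_succ]
    field_simp
    push_cast
    ring

open Polynomial in
noncomputable def cfp (c : ℂ) (m : ℕ) : ℂ[X] := ∏ i ∈ Finset.range m, (C (c - i) - X)

open Polynomial in
theorem cfp_eval (c : ℂ) (m : ℕ) (x : ℂ) : (cfp c m).eval x = cfall (c - x) m := by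
  rw [cfp, cfall, Polynomial.eval_prod]
  refine Finset.prod_congr rfl fun i _ => ?_
  simp; ring

open Polynomial in
theorem cfp_deg (c : ℂ) (m : ℕ) : (cfp c m).natDegree ≤ m := by
  refine (Polynomial.natDegree_prod_le _ _).trans ?_
  refine (Finset.sum_le_card_nsmul _ _ 1 fun i _ => ?_).trans (by simp)
  refine (Polynomial.natDegree_sub_le _ _).trans ?_
  rw [natDegree_C, natDegree_X]; simp

theorem DS_low (n s k : ℕ) (R : ℂ) (hk : k < s) (hn : 2 * s ≤ n) :
    DS s (fun j => cfall ((n : ℂ) - s + 1) j * cfall (R - j) k / cfall (n : ℂ) (j + k)) = 0 := by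
  obtain ⟨m, rfl⟩ := Nat.exists_eq_add_of_lt hk
  have e : DS (k+m+1) (fun j => cfall ((n : ℂ) - (k+m+1 : ℕ) + 1) j * cfall (R - j) k / cfall (n : ℂ) (j + k))
      = DS (k+m+1) (fun j => (1 / cfall (n:ℂ) (k+m)) * (cfp R k * cfp (n - k) m).eval (j:ℂ)) := by
    refine DS_congr fun j hj => ?_
    have h1 := cfall_add (n:ℂ) (k+m) j
    have h2 := cfall_add (n:ℂ) (j+k) m
    rw [show j + k + m = k + m + j by ring, h1] at h2
    have n1 : cfall (n:ℂ) (k+m) ≠ 0 := cfall_ne (by omega)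
    have n2 : cfall (n:ℂ) (j+k) ≠ 0 := cfall_ne (by omega)
    rw [Polynomial.eval_mul, cfp_eval, cfp_eval]
    rw [show (n:ℂ) - (k+m+1 : ℕ) + 1 = n - ((k+m : ℕ):ℂ) by push_cast; ring,
      show (n:ℂ) - k - j = n - ((j+k : ℕ) : ℂ) by push_cast; ring]
    field_simp
    linear_combination cfall (R - j) k * h2
  rw [e, DS_mul, DS_poly, mul_zero]
  refine lt_of_le_of_lt Polynomial.natDegree_mul_le ?_
  have := cfp_deg R k
  have := cfp_deg (n-k) m
  omega

open Polynomial in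
theorem DS_cfall_div (s : ℕ) (R x : ℂ) (hx : ∀ j : ℕ, j ≤ s → x - j ≠ 0) :
    DS s (fun j => cfall (R - j) s * (1 / (x - j))) =
      cfall (R - x) s * ((-1)^s * s.factorial / cfall x (s+1)) := by
  obtain ⟨q, hq⟩ : (X - C x) ∣ (cfp R s - C ((cfp R s).eval x)) := by
    exact X_sub_C_dvd_sub_C_eval
  have e : DS s (fun j => cfall (R - j) s * (1 / (x - j))) =
      DS s (fun j => cfall (R - x) s * (1 / (x - j)) + (-1) * q.eval (j:ℂ)) := by
    refine DS_congr fun j hj => ?_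
    have h := congrArg (Polynomial.eval (j:ℂ)) hq
    simp only [eval_sub, cfp_eval, eval_C, eval_mul, eval_X] at h
    have := hx j hj
    field_simp
    linear_combination h
  rw [e, DS_add, DS_mul, DS_mul, DS_inv s x hx]
  by_cases hq0 : q = 0
  · simp [hq0, DS]
  have hd : q.natDegree + 1 ≤ s := by
    have h1 := congrArg natDegree hq
    rw [natDegree_mul (X_sub_C_ne_zero x) hq0, natDegree_X_sub_C] at h1
    have := cfp_deg R s
    rw [natDegree_sub_C] at h1
    omega
  rw [DS_poly s q hd]
  ring

theorem cfall_neg (z : ℂ) (s : ℕ) : cfall (s - 1 - z) s = (-1)^s * cfall z s := by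
  rw [cfall, ← Finset.prod_range_reflect, cfall]
  have : (-1:ℂ)^s = ∏ i ∈ Finset.range s, (-1) := by simp
  rw [this, ← Finset.prod_mul_distrib]
  refine Finset.prod_congr rfl fun i hi => ?_
  have : i + 1 ≤ s := by simp at hi; omega
  rw [show s - 1 - i = s - (i+1) by omega, Nat.cast_sub this]
  push_cast; ring

theorem DS_top (n s : ℕ) (R : ℂ) (hn : 2 * s ≤ n) :
    DS s (fun j => cfall ((n : ℂ) - s + 1) j * cfall (R - j) s / cfall (n : ℂ) (j + s)) =
     (n+1) / cfall ((n:ℂ)+1) s * cfall (n - R) s * s.factorial / cfall ((n : ℂ) - s + 1) (s+1) := by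
  have hx : ∀ j : ℕ, j ≤ s → ((n : ℂ) - s + 1) - j ≠ 0 := by
    intro j hj
    have : ((n : ℂ) - s + 1) - j = ((n - s + 1 - j : ℕ) : ℂ) := by
      rw [Nat.cast_sub (by omega), Nat.cast_add, Nat.cast_sub (by omega)]; simp
    rw [this]
    exact_mod_cast (by omega)
  have e : DS s (fun j => cfall ((n : ℂ) - s + 1) j * cfall (R - j) s / cfall (n : ℂ) (j + s)) =
    DS s (fun j => ((n+1) / cfall ((n:ℂ)+1) s) * (cfall (R - j) s * (1 / (((n : ℂ) - s + 1) - j)))) := by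
    refine DS_congr fun j hj => ?_
    have h1 := cfall_add ((n:ℂ)+1) s (j+1)
    rw [show s + (j+1) = (j+s)+1 by ring, cfall_succ', cfall_succ] at h1
    have n1 : cfall ((n:ℂ)+1) s ≠ 0 := by
      have := cfall_ne (a := n+1) (k := s) (by omega)
      exact_mod_cast this
    have n2 : cfall (n:ℂ) (j+s) ≠ 0 := cfall_ne (by omega)
    have n3 := hx j hj
    rw [show (n:ℂ)+1-s = n - s + 1 by ring, show (n:ℂ)+1-1 = n by ring] at h1
    field_simp
    linear_combination -cfall (R - j) s * h1
  rw [e, DS_mul, DS_cfall_div s R _ hx, show R - ((n:ℂ) - s + 1) = s - 1 - (n - R) by ring, cfall_neg]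
  have : (-1:ℂ)^s * (-1)^s = 1 := by rw [← pow_add, ← two_mul, pow_mul]; simp
  linear_combination ((n+1) / cfall ((n:ℂ)+1) s * cfall (n - R) s * s.factorial / cfall ((n : ℂ) - s + 1) (s+1)) * this

/-- Hahn coefficient -/
noncomputable def hco (A B R s j : ℕ) : ℂ :=
  (-1)^j * (s.choose j : ℂ) * (cfall (((A+B : ℕ) : ℂ) - s + 1) j / (cfall (A:ℂ) j * cfall (R:ℂ) j))

theorem hahn_eq (A B R s : ℕ) (t : ℂ) :
    hahn (A+B) B R s t = ∑ j ∈ Finset.range (s+1), hco A B R s j * cfall t j := by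
  unfold hahn
  refine Finset.sum_congr rfl fun j _ => ?_
  rw [hco, cbinom, cfall_nat s, Nat.descFactorial_eq_factorial_mul_choose]
  have : ((A+B:ℕ):ℂ) - B = A := by push_cast; ring
  rw [this]
  have := Nat.factorial_ne_zero j
  push_cast
  field_simp

noncomputable def MM (A B R s j k : ℕ) : ℂ :=
  ∑ p ∈ Finset.HasAntidiagonal.antidiagonal R, ((A.choose p.1 * B.choose p.2 : ℕ) : ℂ) *
    hahn (A+B) B R s p.1 * (cfall p.1 j * cfall p.2 k)

theorem MM_zero (A B R s k : ℕ) (hk : k ≤ s) (hA : s ≤ A) (hR : s ≤ R) (hB : s ≤ B) :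
    MM A B R s 0 k = cfall B k * ((A+B).choose R : ℂ) *
      DS s (fun j => cfall (((A+B : ℕ) : ℂ) - s + 1) j * cfall (R - j) k / cfall ((A+B : ℕ) : ℂ) (j + k)) := by
  have h1 : MM A B R s 0 k = ∑ j ∈ Finset.range (s+1), hco A B R s j * (FF A B R j k : ℂ) := by
    simp only [MM, hahn_eq, FF, cfall_nat, Nat.cast_sum, Finset.mul_sum, Finset.sum_mul]
    rw [Finset.sum_comm]
    refine Finset.sum_congr rfl fun j _ => Finset.sum_congr rfl fun p _ => ?_
    push_cast
    simp
    ring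
  rw [h1, DS, Finset.mul_sum]
  refine Finset.sum_congr rfl fun j hj => ?_
  have hj : j ≤ s := by simp at hj; omega
  have h2 := congrArg (Nat.cast : ℕ → ℂ) (FF_eq A B R j k)
  push_cast at h2
  simp only [← cfall_nat] at h2
  rw [cfall_add (R:ℂ)] at h2
  have n1 : cfall (A:ℂ) j ≠ 0 := cfall_ne (by omega)
  have n2 : cfall (R:ℂ) j ≠ 0 := cfall_ne (by omega)
  have n3 : cfall ((A+B:ℕ):ℂ) (j+k) ≠ 0 := cfall_ne (by omega)
  rw [hco]
  field_simp
  linear_combination (s.choose j : ℂ) * cfall (((A+B : ℕ) : ℂ) - s + 1) j * h2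

theorem MM_succ (A B R s j k : ℕ) :
    MM A B R s (j+1) k = - MM A B R s j (k+1) + (R - k - j) * MM A B R s j k := by
  simp only [MM, ← Finset.sum_neg_distrib, Finset.mul_sum, ← Finset.sum_add_distrib]
  refine Finset.sum_congr rfl fun p hp => ?_
  have : p.1 + p.2 = R := by simpa using hp
  rw [← this, cfall_succ, cfall_succ]
  push_cast
  ring

theorem MM_low (A B R s : ℕ) (hA : s ≤ A) (hR : s ≤ R) (hB : s ≤ B) (j : ℕ) :
    ∀ k, j + k < s → MM A B R s j k = 0 := by
  induction j with
  | zero =>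
    intro k hk
    rw [MM_zero A B R s k (by omega) hA hR hB, DS_low _ _ _ _ (by omega) (by omega), mul_zero]
  | succ j ih =>
    intro k hk
    rw [MM_succ, ih k (by omega), ih (k+1) (by omega)]; simp

theorem MM_top (A B R s : ℕ) (hA : s ≤ A) (hR : s ≤ R) (hB : s ≤ B) (j : ℕ) :
    ∀ k, j + k = s → MM A B R s j k = (-1)^j * MM A B R s 0 s := by
  induction j with
  | zero => intro k hk; simp at hk; simp [hk]
  | succ j ih =>
    intro k hk
    rw [MM_succ, ih (k+1) (by omega), MM_low A B R s hA hR hB j k (by omega), pow_succ]; ring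

theorem choose_diff (n s : ℕ) (hn : 2 * s ≤ n) :
    ((n.choose s : ℂ) - if s = 0 then 0 else (n.choose (s - 1) : ℂ)) =
      cfall ((n:ℂ)+1) s * ((n:ℂ) - s + 1 - s) / ((n+1) * s.factorial) := by
  have hn1 : (n:ℂ)+1 ≠ 0 := by exact_mod_cast Nat.succ_ne_zero n
  rcases s with _ | s
  · simp [cfall_zero, hn1]
  have e : ∀ m, (n.choose m : ℂ) = cfall n m / m.factorial := by
    intro m
    rw [cfall_nat, Nat.descFactorial_eq_factorial_mul_choose]
    have := Nat.factorial_ne_zero m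
    push_cast
    field_simp
  have := Nat.factorial_ne_zero s
  have hs1 : (s:ℂ)+1 ≠ 0 := by exact_mod_cast Nat.succ_ne_zero s
  rw [if_neg (by omega), e, e, Nat.add_sub_cancel, cfall_succ, cfall_succ', Nat.factorial_succ,
    show (n:ℂ)+1-1 = n by ring]
  push_cast
  field_simp
  ring

theorem sum_sq (A B R s : ℕ) (hA : s ≤ A) (hR : s ≤ R) (hB : s ≤ B) :
    ∑ p ∈ Finset.HasAntidiagonal.antidiagonal R, ((A.choose p.1 * B.choose p.2 : ℕ) : ℂ) *
      hahn (A+B) B R s p.1 ^ 2 =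
    (cfall (B : ℂ) s * cfall (((A+B : ℕ) : ℂ) - R) s / (cfall (A : ℂ) s * cfall (R : ℂ) s)) *
      (((A+B).choose R : ℂ) / (((A+B).choose s : ℂ) - if s = 0 then 0 else ((A+B).choose (s - 1) : ℂ))) := by
  have h1 : ∑ p ∈ Finset.HasAntidiagonal.antidiagonal R, ((A.choose p.1 * B.choose p.2 : ℕ) : ℂ) *
      hahn (A+B) B R s p.1 ^ 2 = ∑ j ∈ Finset.range (s+1), hco A B R s j * MM A B R s j 0 := by
    simp only [MM, Finset.mul_sum]
    rw [Finset.sum_comm]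
    refine Finset.sum_congr rfl fun p _ => ?_
    rw [sq]
    nth_rewrite 2 [hahn_eq]
    rw [Finset.mul_sum, Finset.mul_sum]
    refine Finset.sum_congr rfl fun j _ => ?_
    rw [cfall_zero]
    ring
  rw [h1, Finset.sum_range_succ, Finset.sum_eq_zero, zero_add, MM_top A B R s hA hR hB s 0 (by omega),
    MM_zero A B R s s le_rfl hA hR hB, DS_top _ _ _ (by omega), choose_diff _ _ (by omega), hco]
  · have n1 : cfall (A:ℂ) s ≠ 0 := cfall_ne (by omega)
    have n2 : cfall (R:ℂ) s ≠ 0 := cfall_ne (by omega)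
    have e : (((A+B : ℕ) : ℂ) - s + 1) = ((A+B-s+1 : ℕ) : ℂ) := by
      rw [Nat.cast_add (A+B-s), Nat.cast_sub (by omega)]; simp
    have n3 : cfall (((A+B : ℕ) : ℂ) - s + 1) s ≠ 0 := by
      rw [e]; exact cfall_ne (by omega)
    have n4 : (((A+B : ℕ) : ℂ) - s + 1) - s ≠ 0 := by
      rw [e, ← Nat.cast_sub (by omega)]
      exact_mod_cast (by omega)
    have n5 : cfall (((A+B : ℕ):ℂ)+1) s ≠ 0 := by
      have := cfall_ne (a := A+B+1) (k := s) (by omega)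
      exact_mod_cast this
    have n6 : ((A+B : ℕ):ℂ)+1 ≠ 0 := by exact_mod_cast Nat.succ_ne_zero (A+B)
    have n7 := Nat.factorial_ne_zero s
    rw [cfall_succ]
    have : (-1:ℂ)^s * (-1)^s = 1 := by rw [← pow_add, ← two_mul, pow_mul]; simp
    generalize ((A+B : ℕ):ℂ) = n at *
    rw [Nat.choose_self, Nat.cast_one]
    generalize (-1:ℂ)^s = z at *
    generalize cfall (n-s+1) s = y at *
    generalize n - s + 1 - s = v at *
    field_simp
    linear_combination cfall (B:ℂ) s * ((A + B).choose R : ℂ) * cfall (n - R) s * this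
  · intro j hj
    rw [MM_low A B R s hA hR hB j 0 (by simp at hj; omega), mul_zero]

theorem count {Ω : Type*} [Fintype Ω] [DecidableEq Ω] (A B R : ℕ) (f : ℕ → ℂ) (x : Finset Ω)
    (hx : x.card = B) (hn : Fintype.card Ω = A + B) :
    ∑ y : {y : Finset Ω // y.card = R}, f ((y : Finset Ω) \ x).card =
      ∑ p ∈ Finset.HasAntidiagonal.antidiagonal R, ((A.choose p.1 * B.choose p.2 : ℕ) : ℂ) * f p.1 := by
  have h0 : ∑ y : {y : Finset Ω // y.card = R}, f ((y : Finset Ω) \ x).card =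
      ∑ y ∈ Finset.univ.filter (fun y : Finset Ω => y.card = R), f (y \ x).card :=
    (Finset.sum_subtype _ (by simp) (fun y : Finset Ω => f (y \ x).card)).symm
  have hmap : ∀ y ∈ Finset.univ.filter (fun y : Finset Ω => y.card = R),
      ((y \ x).card, (y ∩ x).card) ∈ Finset.HasAntidiagonal.antidiagonal R := by
    intro y hy
    simp at hy ⊢
    exact hy
  rw [h0, ← Finset.sum_fiberwise_of_maps_to hmap]
  refine Finset.sum_congr rfl fun p hp => ?_
  have hp' : p.1 + p.2 = R := by simpa using hp
  rw [Finset.sum_congr rfl (g := fun _ => f p.1), Finset.sum_const, nsmul_eq_mul]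
  · congr 2
    have hc : (xᶜ).card = A := by rw [Finset.card_compl]; omega
    rw [← hc, ← hx, ← Finset.card_powersetCard, ← Finset.card_powersetCard, ← Finset.card_product]
    refine Finset.card_bij' (fun y _ => (y \ x, y ∩ x)) (fun q _ => q.1 ∪ q.2) ?_ ?_ ?_ ?_
    · intro y hy
      simp [Prod.ext_iff] at hy
      simp [Finset.mem_powersetCard, hy.2]
    · intro q hq
      simp [Finset.mem_powersetCard] at hq
      obtain ⟨⟨a1, a2⟩, a3, a4⟩ := hq
      have d : Disjoint q.1 x := by
        rw [Finset.disjoint_left]; intro a ha; simpa using a1 ha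
      have e1 : (q.1 ∪ q.2) \ x = q.1 := by
        rw [Finset.union_sdiff_distrib, Finset.sdiff_eq_self_of_disjoint d, Finset.sdiff_eq_empty_iff_subset.2 a3]; simp
      have e2 : (q.1 ∪ q.2) ∩ x = q.2 := by
        rw [Finset.union_inter_distrib_right, Finset.disjoint_iff_inter_eq_empty.1 d, Finset.inter_eq_left.2 a3]; simp
      simp [Prod.ext_iff, e1, e2, a2, a4]
      rw [Finset.card_union_of_disjoint (d.mono_right a3), a2, a4, hp']
    · intro y _
      exact Finset.sdiff_union_inter y x
    · intro q hq
      simp [Finset.mem_powersetCard] at hq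
      obtain ⟨⟨a1, a2⟩, a3, a4⟩ := hq
      have d : Disjoint q.1 x := by
        rw [Finset.disjoint_left]; intro a ha; simpa using a1 ha
      have e1 : (q.1 ∪ q.2) \ x = q.1 := by
        rw [Finset.union_sdiff_distrib, Finset.sdiff_eq_self_of_disjoint d, Finset.sdiff_eq_empty_iff_subset.2 a3]; simp
      have e2 : (q.1 ∪ q.2) ∩ x = q.2 := by
        rw [Finset.union_inter_distrib_right, Finset.disjoint_iff_inter_eq_empty.1 d, Finset.inter_eq_left.2 a3]; simp
      simp [e1, e2]
  · intro y hy
    simp [Prod.ext_iff] at hy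
    rw [hy.2.1]

/-- Hilbert–Schmidt norm:
`tr(Λ_s^{r1,r2} (Λ_s^{r1,r2})*) = Σ_{x1,x2} λ_s^{r1,r2}(|x2\x1|;n)²
  = ([r1]_s [n-r2]_s/([n-r1]_s [r2]_s)) binom(n,r1) binom(n,r2)/(binom(n,s)-binom(n,s-1))`. -/
theorem stmt_10 {Ω : Type*} [Fintype Ω] [DecidableEq Ω] (n r1 r2 s : ℕ)
    (hn : Fintype.card Ω = n) (h1 : r1 ≤ n) (h2 : r2 ≤ n)
    (hs : s ≤ min (min r1 (n - r1)) (min r2 (n - r2))) :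
    ∑ x1 : {x : Finset Ω // x.card = r1}, ∑ x2 : {x : Finset Ω // x.card = r2},
        (hahn n r1 r2 s ((((x2 : Finset Ω) \ (x1 : Finset Ω)).card : ℕ) : ℂ)) ^ 2 =
      (cfall (r1 : ℂ) s * cfall ((n : ℂ) - r2) s /
          (cfall ((n : ℂ) - r1) s * cfall (r2 : ℂ) s)) *
        ((n.choose r1 : ℂ) * (n.choose r2 : ℂ) /
          ((n.choose s : ℂ) - if s = 0 then 0 else (n.choose (s - 1) : ℂ))) := by
  subst hn
  have hs' : s ≤ r1 ∧ s ≤ Fintype.card Ω - r1 ∧ s ≤ r2 ∧ s ≤ Fintype.card Ω - r2 := by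
    simp at hs; omega
  obtain ⟨A, hA⟩ : ∃ A, Fintype.card Ω = A + r1 := ⟨Fintype.card Ω - r1, by omega⟩
  have key : ∀ x1 : {x : Finset Ω // x.card = r1}, ∑ x2 : {x : Finset Ω // x.card = r2},
        (hahn (Fintype.card Ω) r1 r2 s
          ((((x2 : Finset Ω) \ (x1 : Finset Ω)).card : ℕ) : ℂ)) ^ 2 = _ := fun x1 =>
    count A r1 r2 (fun t => hahn (Fintype.card Ω) r1 r2 s (t : ℂ) ^ 2) x1.1 x1.2 hA
  rw [Finset.sum_congr rfl (fun x1 _ => key x1), Finset.sum_const, Finset.card_univ,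
    Fintype.card_finset_len, nsmul_eq_mul]
  have e : ((A + r1 : ℕ) : ℂ) - r1 = A := by push_cast; ring
  rw [hA, sum_sq A r1 r2 s (by omega) (by omega) (by omega), e]
  ring
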